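/- arXiv:1602.00294 — 2 statements merged into one kernel-verified Lean document; each statement's English description precedes it below -/
import Mathlib

section
/- Let H₁ and H₂ be complex Hilbert spaces, let T : H₁ → H₂ be a bounded linear operator with Hilbert adjoint T* : H₂ → H₁, and let a, b ∈ ℂ satisfy Re(−a·b) ≥ 0 or Im(a·b) ≠ 0. If ξ_C ∈ H₁ and ξ_I ∈ H₂ satisfy ξ_C + a·T*(ξ_I) = 0 and ξ_I + b·T(ξ_C) = 0, then ξ_C = 0 and ξ_I = 0. -/
/-!
Pairing the first equation with `ξC`, moving the operator across the inner product and
substituting the second equation gives `‖ξC‖² = a b ‖T ξC‖²`. If `ξC ≠ 0`, this makes `a b` a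
positive real number, i.e. `0 < a b` in the complex order. The system is invariant under exchanging
the two residuals (and `T` with `T*`, `a` with `b`), so the same argument gives `ξI = 0`.
-/

open scoped ComplexOrder InnerProductSpace

section InnerProduct

variable {𝕜 E F : Type*} [RCLike 𝕜]
  [NormedAddCommGroup E] [InnerProductSpace 𝕜 E] [NormedAddCommGroup F] [InnerProductSpace 𝕜 F]

theorem norm_sq_eq_mul_norm_sq_of_inner_eq {a b : 𝕜} {x v : E} {u y : F}
    (h : ⟪x, v⟫_𝕜 = ⟪u, y⟫_𝕜) (hx : x + a • v = 0) (hy : y + b • u = 0) :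
    (‖x‖ : 𝕜) ^ 2 = a * b * (‖u‖ : 𝕜) ^ 2 := by
  have hx' : x = -(a • v) := eq_neg_of_add_eq_zero_left hx
  have hy' : y = -(b • u) := eq_neg_of_add_eq_zero_left hy
  calc
    (‖x‖ : 𝕜) ^ 2 = ⟪x, x⟫_𝕜 := (inner_self_eq_norm_sq_to_K x).symm
    _ = ⟪x, -(a • v)⟫_𝕜 := congrArg (inner 𝕜 x) hx'
    _ = -(a * ⟪u, y⟫_𝕜) := by rw [inner_neg_right, inner_smul_right, h]
    _ = a * b * ⟪u, u⟫_𝕜 := by rw [hy', inner_neg_right, inner_smul_right]; ring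
    _ = a * b * (‖u‖ : 𝕜) ^ 2 := by rw [inner_self_eq_norm_sq_to_K]

theorem eq_zero_of_inner_eq_of_not_pos {a b : 𝕜} (hab : ¬ 0 < a * b) {x v : E} {u y : F}
    (h : ⟪x, v⟫_𝕜 = ⟪u, y⟫_𝕜) (hx : x + a • v = 0) (hy : y + b • u = 0) : x = 0 := by
  by_contra hx_ne
  have hu_nonneg : (0 : 𝕜) ≤ (‖u‖ : 𝕜) ^ 2 := by
    exact_mod_cast sq_nonneg ‖u‖
  have hmul_pos : 0 < a * b * (‖u‖ : 𝕜) ^ 2 := by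
    rw [← norm_sq_eq_mul_norm_sq_of_inner_eq h hx hy]
    exact_mod_cast pow_pos (norm_pos_iff.mpr hx_ne) 2
  exact hab (pos_of_mul_pos_left hmul_pos hu_nonneg)

theorem stmt_0_general {T : E →ₗ.[𝕜] F} {S : F →ₗ.[𝕜] E} (hTS : T.IsFormalAdjoint S)
    {a b : 𝕜} (hab : ¬ 0 < a * b) (x : T.domain) (y : S.domain)
    (hx : (x : E) + a • S y = 0) (hy : (y : F) + b • T x = 0) :
    (x : E) = 0 ∧ (y : F) = 0 :=
  ⟨eq_zero_of_inner_eq_of_not_pos hab (hTS x y).symm hx hy,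
    eq_zero_of_inner_eq_of_not_pos (mul_comm a b ▸ hab) (hTS.symm y x).symm hy hx⟩

end InnerProduct

theorem isFormalAdjoint_toPMap_adjoint {𝕜 E F : Type*} [RCLike 𝕜]
    [NormedAddCommGroup E] [InnerProductSpace 𝕜 E] [CompleteSpace E]
    [NormedAddCommGroup F] [InnerProductSpace 𝕜 F] [CompleteSpace F]
    (T : E →L[𝕜] F) (p : Submodule 𝕜 E) (q : Submodule 𝕜 F) :
    (T.toPMap p).IsFormalAdjoint (T.adjoint.toPMap q) :=
  fun x y => (T.adjoint_inner_right (x : E) (y : F)).symm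

theorem not_complex_pos_iff {c : ℂ} : ¬ 0 < c ↔ 0 ≤ (-c).re ∨ c.im ≠ 0 := by
  rw [Complex.pos_iff, not_and_or, not_lt, Complex.neg_re, neg_nonneg, ne_comm]

/-- Abstract Hilbert-space form of the consistency Lemma 1:
if `Re(-a*b) ≥ 0` or `Im(a*b) ≠ 0`, and `ξ_C + a T* ξ_I = 0`, `ξ_I + b T ξ_C = 0`,
then both residuals vanish. -/
theorem stmt_0 {H₁ H₂ : Type*}
    [NormedAddCommGroup H₁] [InnerProductSpace ℂ H₁] [CompleteSpace H₁]
    [NormedAddCommGroup H₂] [InnerProductSpace ℂ H₂] [CompleteSpace H₂]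
    (T : H₁ →L[ℂ] H₂) (a b : ℂ)
    (hab : 0 ≤ (-(a * b)).re ∨ (a * b).im ≠ 0)
    (ξC : H₁) (ξI : H₂)
    (h1 : ξC + a • (ContinuousLinearMap.adjoint T) ξI = 0)
    (h2 : ξI + b • T ξC = 0) :
    ξC = 0 ∧ ξI = 0 := by
  exact stmt_0_general (isFormalAdjoint_toPMap_adjoint T ⊤ ⊤) (not_complex_pos_iff.mpr hab)
    ⟨ξC, trivial⟩ ⟨ξI, trivial⟩ h1 h2
end

section
/- Let R > 1 be a real number, let β_I, β_C ∈ ℂ, and let ω, μ be nonzero real numbers. Then the sequence n ↦ T_C(n)·(1 − n·β_I) / ( i·ω·μ·(1 − n·β_C) ) tends to 1 as n → ∞; that is, T_C(n) ∼ iωμ·(1 − n β_C)/(1 − n β_I) for large n. -/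
open Complex

/-- Insulator coefficient `𝔸_I(n) = -n (1 + R^{-2n})` (as a complex number). -/
noncomputable def 𝔸I (R : ℝ) (n : ℕ) : ℂ := -(n : ℂ) * (1 + (R : ℂ) ^ (-(2 * (n : ℤ))))

/-- Insulator coefficient `𝔹_I(n) = n(n+1)(1 - R^{-2n})` (as a complex number). -/
noncomputable def 𝔹I (R : ℝ) (n : ℕ) : ℂ :=
  (n : ℂ) * ((n : ℂ) + 1) * (1 - (R : ℂ) ^ (-(2 * (n : ℤ))))

/-- Insulator-to-conductor eigenvalue of the iteration operator (Proposition 1):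
`T_C(n) = -iωμ (𝔹_I(n)/√(n(n+1)) + β_C √(n(n+1)) 𝔸_I(n)) / (𝔸_I(n) + β_I 𝔹_I(n))`. -/
noncomputable def eigTC (R : ℝ) (βI βC : ℂ) (ω μ : ℝ) (n : ℕ) : ℂ :=
  -(Complex.I * (ω : ℂ) * (μ : ℂ)) *
      (𝔹I R n / (Real.sqrt ((n : ℝ) * ((n : ℝ) + 1)) : ℂ)
        + βC * (Real.sqrt ((n : ℝ) * ((n : ℝ) + 1)) : ℂ) * 𝔸I R n) /
    (𝔸I R n + βI * 𝔹I R n)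

/-!
Since `R ^ (-2n) → 0` and `√(n(n+1)) ∼ n`, we have `𝔸I ∼ -n` and `𝔹I ∼ n²`. The numerator of `T_C`
is therefore a term `∼ n` plus `β_C` times a term `∼ -n²`, and its denominator a term `∼ -n` plus
`β_I` times a term `∼ n²`. Equivalents cannot be added in general, but here the two terms of each
sum have different orders, so they cannot cancel.
-/

open Filter Topology Asymptotics

theorem isEquivalent_add_const_smul_of_isLittleO {α 𝕜 E : Type*} [NormedField 𝕜]
    [NormedAddCommGroup E] [NormedSpace 𝕜 E] {l : Filter α} {f g u v : α → E} (c : 𝕜)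
    (hfg : f =o[l] g) (hu : u ~[l] f) (hv : v ~[l] g) : u + c • v ~[l] f + c • g := by
  rcases eq_or_ne c 0 with rfl | hc
  · simpa only [zero_smul, add_zero] using hu
  have hf : f =o[l] (c • g) := (isLittleO_const_smul_right hc).mpr hfg
  have hcv : c • v ~[l] c • g := (IsEquivalent.refl (u := fun _ => c)).smul hv
  have hleft : u + c • v ~[l] c • g := (hu.trans_isLittleO hf).add_isEquivalent hcv
  have hright : f + c • g ~[l] c • g := hf.add_isEquivalent .refl
  exact hleft.trans hright.symm

theorem isEquivalent_mul_of_tendsto_one {α 𝕜 : Type*} [NormedField 𝕜] {l : Filter α}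
    {u v φ : α → 𝕜} (huv : u ~[l] v) (hφ : Tendsto φ l (𝓝 1)) : (fun x => u x * φ x) ~[l] v := by
  simpa only [Pi.mul_def, Function.const_apply, mul_one] using
    huv.mul ((isEquivalent_const_iff_tendsto one_ne_zero).mpr hφ)

theorem isEquivalent_sqrt {α : Type*} {l : Filter α} {u v : α → ℝ} (hv : 0 ≤ v)
    (huv : u ~[l] v) : (fun x => √(u x)) ~[l] fun x => √(v x) := by
  simp only [Real.sqrt_eq_rpow]
  exact huv.rpow hv

theorem isEquivalent_ofReal {α : Type*} {l : Filter α} {u v : α → ℝ} (huv : u ~[l] v) :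
    (fun x => (u x : ℂ)) ~[l] fun x => (v x : ℂ) := by
  have hsub : (fun x => ((u x - v x : ℝ) : ℂ)) =o[l] fun x => (v x : ℂ) :=
    isLittleO_ofReal_left.mpr (isLittleO_ofReal_right.mpr huv)
  simpa only [IsEquivalent, Pi.sub_def, ofReal_sub] using hsub

theorem eventually_one_sub_natCast_mul_ne_zero {K : Type*} [DivisionRing K] [CharZero K] (β : K) :
    ∀ᶠ n : ℕ in atTop, 1 - (n : K) * β ≠ 0 := by
  rw [← Nat.cofinite_eq_atTop]
  filter_upwards [Nat.cast_injective.tendsto_cofinite.eventually (eventually_cofinite_ne β⁻¹)]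
    with n hn h
  exact hn (eq_inv_of_mul_eq_one_left (sub_eq_zero.mp h).symm)

theorem tendsto_zpow_neg_two_mul_natCast {K : Type*} [NormedDivisionRing K] {z : K}
    (hz : 1 < ‖z‖) : Tendsto (fun n : ℕ => z ^ (-(2 * (n : ℤ)))) atTop (𝓝 0) := by
  have hinv : ‖(z ^ 2)⁻¹‖ < 1 := by
    rw [norm_inv, norm_pow]
    exact inv_lt_one_of_one_lt₀ (one_lt_pow₀ hz two_ne_zero)
  refine (tendsto_pow_atTop_nhds_zero_of_norm_lt_one hinv).congr fun n => ?_
  rw [inv_pow, ← pow_mul, zpow_neg]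
  norm_cast

section NatCastAsymptotics

variable {K : Type*} [NormedField K] [NormSMulClass ℤ K]

theorem isEquivalent_natCast_add_one :
    (fun n : ℕ => (n : K) + 1) ~[atTop] fun n : ℕ => (n : K) :=
  IsEquivalent.refl.add_const_of_norm_tendsto_atTop
    (tendsto_norm_cobounded_atTop.comp tendsto_natCast_atTop_cobounded)

theorem isEquivalent_natCast_mul_add_one :
    (fun n : ℕ => (n : K) * (n + 1)) ~[atTop] fun n : ℕ => (n : K) ^ 2 := by
  simp only [sq]
  exact IsEquivalent.refl.mul isEquivalent_natCast_add_one

theorem isLittleO_natCast_natCast_sq :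
    (fun n : ℕ => (n : K)) =o[atTop] fun n : ℕ => (n : K) ^ 2 := by
  simpa only [pow_one] using! (isLittleO_pow_pow_cobounded_of_lt (R := K) one_lt_two).comp_tendsto
    tendsto_natCast_atTop_cobounded

end NatCastAsymptotics

theorem isEquivalent_sqrt_natCast_mul_add_one :
    (fun n : ℕ => (√((n : ℝ) * (n + 1)) : ℂ)) ~[atTop] fun n : ℕ => (n : ℂ) := by
  simpa only [Real.sqrt_sq (Nat.cast_nonneg _), ofReal_natCast] using
    isEquivalent_ofReal (isEquivalent_sqrt (fun n => by positivity)
      (isEquivalent_natCast_mul_add_one (K := ℝ)))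

section Eigenvalue

variable {R : ℝ}

theorem isEquivalent_𝔸I (hR : 1 < |R|) : 𝔸I R ~[atTop] fun n : ℕ => -(n : ℂ) := by
  have hfactor : Tendsto (fun n : ℕ => 1 + (R : ℂ) ^ (-(2 * (n : ℤ)))) atTop (𝓝 1) := by
    simpa only [add_zero] using
      (tendsto_zpow_neg_two_mul_natCast (z := (R : ℂ)) (by simpa using hR)).const_add 1
  exact isEquivalent_mul_of_tendsto_one .refl hfactor

theorem isEquivalent_𝔹I (hR : 1 < |R|) : 𝔹I R ~[atTop] fun n : ℕ => (n : ℂ) ^ 2 := by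
  have hfactor : Tendsto (fun n : ℕ => 1 - (R : ℂ) ^ (-(2 * (n : ℤ)))) atTop (𝓝 1) := by
    simpa only [sub_zero] using
      (tendsto_zpow_neg_two_mul_natCast (z := (R : ℂ)) (by simpa using hR)).const_sub 1
  exact isEquivalent_mul_of_tendsto_one isEquivalent_natCast_mul_add_one hfactor

theorem isEquivalent_eigTC_numerator (hR : 1 < |R|) (βC : ℂ) :
    (fun n : ℕ => 𝔹I R n / (√((n : ℝ) * (n + 1)) : ℂ) + βC * (√((n : ℝ) * (n + 1)) : ℂ) * 𝔸I R n)
      ~[atTop] fun n : ℕ => n * (1 - n * βC) := by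
  have hs := isEquivalent_sqrt_natCast_mul_add_one
  have hquot : (fun n : ℕ => 𝔹I R n / (√((n : ℝ) * (n + 1)) : ℂ)) ~[atTop]
      fun n : ℕ => (n : ℂ) := by
    refine ((isEquivalent_𝔹I hR).div hs).congr_right (.of_forall fun n => ?_)
    simp only [Pi.div_apply, sq, mul_self_div_self]
  have hprod : (fun n : ℕ => (√((n : ℝ) * (n + 1)) : ℂ) * 𝔸I R n) ~[atTop]
      fun n : ℕ => -(n : ℂ) ^ 2 := by
    refine (hs.mul (isEquivalent_𝔸I hR)).congr_right (.of_forall fun n => ?_)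
    simp only [Pi.mul_apply]
    ring
  convert! isEquivalent_add_const_smul_of_isLittleO βC
    isLittleO_natCast_natCast_sq.neg_right hquot hprod using 2 with n n <;>
  · simp only [Pi.add_apply, Pi.smul_apply, smul_eq_mul]
    ring

theorem isEquivalent_eigTC_denominator (hR : 1 < |R|) (βI : ℂ) :
    (fun n : ℕ => 𝔸I R n + βI * 𝔹I R n) ~[atTop] fun n : ℕ => -(n * (1 - n * βI)) := by
  convert! isEquivalent_add_const_smul_of_isLittleO βI isLittleO_natCast_natCast_sq.neg_left
    (isEquivalent_𝔸I hR) (isEquivalent_𝔹I hR) using 2 with n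
  simp only [Pi.add_apply, Pi.smul_apply, smul_eq_mul]
  ring

theorem isEquivalent_eigTC (hR : 1 < |R|) (βI βC : ℂ) (ω μ : ℝ) :
    eigTC R βI βC ω μ ~[atTop] fun n : ℕ => I * ω * μ * (1 - n * βC) / (1 - n * βI) := by
  have hquot := ((IsEquivalent.refl (u := fun _ : ℕ => -(I * ω * μ))).mul
    (isEquivalent_eigTC_numerator hR βC)).div (isEquivalent_eigTC_denominator hR βI)
  refine hquot.congr_right ?_
  filter_upwards [eventually_ne_atTop 0] with n hn
  have hn' : -(n : ℂ) ≠ 0 := neg_ne_zero.mpr (Nat.cast_ne_zero.mpr hn)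
  rw [← mul_div_mul_left _ (1 - n * βI) hn']
  simp only [Pi.div_apply, Pi.mul_apply]
  ring

end Eigenvalue

theorem stmt_5_general (R : ℝ) (hR : 1 < |R|) (βI βC : ℂ) (ω μ : ℝ) (hω : ω ≠ 0) (hμ : μ ≠ 0) :
    Tendsto
      (fun n : ℕ => eigTC R βI βC ω μ n * (1 - (n : ℂ) * βI) /
        (I * (ω : ℂ) * (μ : ℂ) * (1 - (n : ℂ) * βC)))
      atTop (𝓝 1) := by
  have hscalar : I * (ω : ℂ) * (μ : ℂ) ≠ 0 :=
    mul_ne_zero (mul_ne_zero I_ne_zero (ofReal_ne_zero.mpr hω)) (ofReal_ne_zero.mpr hμ)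
  have hne : ∀ᶠ n : ℕ in atTop, I * ω * μ * (1 - n * βC) / (1 - n * βI) ≠ 0 := by
    filter_upwards [eventually_one_sub_natCast_mul_ne_zero βC,
      eventually_one_sub_natCast_mul_ne_zero βI] with n hC hI
    exact div_ne_zero (mul_ne_zero hscalar hC) hI
  simpa only [Pi.div_def, div_div_eq_mul_div] using
    (isEquivalent_iff_tendsto_one hne).mp (isEquivalent_eigTC hR βI βC ω μ)

/-- `T_C(n) ∼ iωμ (1 - n β_C)/(1 - n β_I)` as `n → ∞`. -/
theorem stmt_5 (R : ℝ) (hR : 1 < R) (βI βC : ℂ) (ω μ : ℝ) (hω : ω ≠ 0) (hμ : μ ≠ 0) :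
    Filter.Tendsto
      (fun n : ℕ => eigTC R βI βC ω μ n * (1 - (n : ℂ) * βI) /
        (Complex.I * (ω : ℂ) * (μ : ℂ) * (1 - (n : ℂ) * βC)))
      Filter.atTop (nhds 1) :=
  stmt_5_general R (hR.trans_le (le_abs_self R)) βI βC ω μ hω hμ
end
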